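/- Let m ∈ ℕ and let v₁,…,v_m ∈ ℝⁿ satisfy ⟨v_i, C v_j⟩ = 0 for all i, j ≤ m, where C := S⁻¹. Then for every polynomial function Φ : ℝ^m → ℂ, the ratio ∫_{ℝⁿ} Φ(⟨x,v₁⟩,…,⟨x,v_m⟩)·exp(−ε‖x‖²)·exp((i/2)⟨x,Sx⟩) dx ⧸ ∫_{ℝⁿ} exp(−ε‖x‖²)·exp((i/2)⟨x,Sx⟩) dx converges, as ε → 0⁺, to Φ(0,…,0). (For every ε > 0 the numerator is absolutely convergent and the denominator is nonzero.) -/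

import Mathlib

open MeasureTheory Matrix

lemma aux_int1 {b : ℂ} (hb : 0 < b.re) (a : ℕ) :
    Integrable fun x : ℝ => (x : ℂ) ^ a * Complex.exp (-b * (x : ℂ) ^ 2) := by
  have h := integrable_rpow_mul_exp_neg_mul_sq hb (s := a)
    (by have : (0 : ℝ) ≤ a := Nat.cast_nonneg a
        linarith)
  refine h.norm.mono' (by fun_prop) (Filter.Eventually.of_forall fun x => ?_)
  rw [norm_mul, norm_mul, Real.rpow_natCast, norm_pow, norm_pow, Complex.norm_real,
    Complex.norm_exp, Real.norm_eq_abs (Real.exp _), abs_of_pos (Real.exp_pos _)]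
  apply le_of_eq
  congr 2
  rw [← Complex.ofReal_pow, Complex.re_mul_ofReal]
  simp

lemma aux_rec1 {b : ℂ} (hb : 0 < b.re) (a : ℕ) :
    ∫ x : ℝ, (x : ℂ) ^ (a + 1) * Complex.exp (-b * (x : ℂ) ^ 2) =
      (a : ℂ) / (2 * b) * ∫ x : ℝ, (x : ℂ) ^ (a - 1) * Complex.exp (-b * (x : ℂ) ^ 2) := by
  have hb0 : b ≠ 0 := by
    rintro rfl
    simp at hb
  have hd : ∀ x : ℝ, HasDerivAt (fun x : ℝ => (x : ℂ) ^ a * Complex.exp (-b * (x : ℂ) ^ 2))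
      ((a : ℂ) * ((x : ℂ) ^ (a - 1) * Complex.exp (-b * (x : ℂ) ^ 2)) -
        (2 * b) * ((x : ℂ) ^ (a + 1) * Complex.exp (-b * (x : ℂ) ^ 2))) x := by
    intro x
    have h1 : HasDerivAt (fun z : ℂ => z ^ a * Complex.exp (-b * z ^ 2))
      ((a : ℂ) * ((x : ℂ) ^ (a - 1) * Complex.exp (-b * (x : ℂ) ^ 2)) -
        (2 * b) * ((x : ℂ) ^ (a + 1) * Complex.exp (-b * (x : ℂ) ^ 2))) (x : ℂ) := by
      have h2 := (hasDerivAt_pow a (x : ℂ)).mul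
        (((hasDerivAt_pow 2 (x : ℂ)).const_mul (-b)).cexp)
      refine h2.congr_deriv ?_
      push_cast
      ring
    exact h1.comp_ofReal
  have i1 := (aux_int1 hb (a - 1)).const_mul (a : ℂ)
  have i2 := (aux_int1 hb (a + 1)).const_mul (2 * b)
  have h0 := integral_eq_zero_of_hasDerivAt_of_integrable hd (i1.sub i2) (aux_int1 hb a)
  rw [integral_sub i1 i2, integral_const_mul, integral_const_mul, sub_eq_zero] at h0
  rw [div_mul_eq_mul_div, h0, mul_div_cancel_left₀ _ (mul_ne_zero two_ne_zero hb0)]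

/-- Unnormalized diagonal Gaussian functional on polynomials. -/
noncomputable def auxG {n : ℕ} (b : Fin n → ℂ) (p : MvPolynomial (Fin n) ℂ) : ℂ :=
  ∫ y : Fin n → ℝ, MvPolynomial.eval (fun k => (y k : ℂ)) p *
    ∏ k, Complex.exp (-b k * (y k : ℂ) ^ 2)

lemma aux_mono {n : ℕ} (b : Fin n → ℂ) (s : Fin n →₀ ℕ) (c : ℂ) (y : Fin n → ℝ) :
    MvPolynomial.eval (fun k => (y k : ℂ)) (MvPolynomial.monomial s c) *
      ∏ k, Complex.exp (-b k * (y k : ℂ) ^ 2) =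
    c * ∏ k, ((y k : ℂ) ^ (s k) * Complex.exp (-b k * (y k : ℂ) ^ 2)) := by
  rw [MvPolynomial.eval_monomial, Finset.prod_mul_distrib, mul_assoc,
    Finsupp.prod_fintype _ _ (by simp)]

lemma aux_intG {n : ℕ} {b : Fin n → ℂ} (hb : ∀ k, 0 < (b k).re) (p : MvPolynomial (Fin n) ℂ) :
    Integrable fun y : Fin n → ℝ => MvPolynomial.eval (fun k => (y k : ℂ)) p *
      ∏ k, Complex.exp (-b k * (y k : ℂ) ^ 2) := by
  induction p using MvPolynomial.induction_on' with
  | monomial s c =>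
    simp_rw [aux_mono]
    exact (Integrable.fintype_prod (fun k => aux_int1 (hb k) (s k))).const_mul c
  | add p q hp hq =>
    simp_rw [map_add, add_mul]
    exact hp.add hq

lemma auxG_add {n : ℕ} {b : Fin n → ℂ} (hb : ∀ k, 0 < (b k).re) (p q : MvPolynomial (Fin n) ℂ) :
    auxG b (p + q) = auxG b p + auxG b q := by
  unfold auxG
  rw [← integral_add (aux_intG hb p) (aux_intG hb q)]
  simp_rw [map_add, add_mul]

lemma auxG_C_mul {n : ℕ} (b : Fin n → ℂ) (c : ℂ) (p : MvPolynomial (Fin n) ℂ) :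
    auxG b (MvPolynomial.C c * p) = c * auxG b p := by
  unfold auxG
  rw [← integral_const_mul]
  simp_rw [map_mul, MvPolynomial.eval_C, mul_assoc]

lemma auxG_sum {n : ℕ} {b : Fin n → ℂ} (hb : ∀ k, 0 < (b k).re) {ι : Type*} (t : Finset ι)
    (f : ι → MvPolynomial (Fin n) ℂ) :
    auxG b (∑ i ∈ t, f i) = ∑ i ∈ t, auxG b (f i) := by
  classical
  induction t using Finset.induction_on with
  | empty => simp [auxG]
  | insert a t ha ih => rw [Finset.sum_insert ha, Finset.sum_insert ha, auxG_add hb, ih]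

lemma auxG_monomial {n : ℕ} (b : Fin n → ℂ) (s : Fin n →₀ ℕ) (c : ℂ) :
    auxG b (MvPolynomial.monomial s c) =
      c * ∏ k, ∫ x : ℝ, (x : ℂ) ^ (s k) * Complex.exp (-b k * (x : ℂ) ^ 2) := by
  unfold auxG
  simp_rw [aux_mono]
  rw [integral_const_mul, integral_fintype_prod_volume_eq_prod
    (fun k (x : ℝ) => (x : ℂ) ^ (s k) * Complex.exp (-b k * (x : ℂ) ^ 2))]

lemma auxG_one_ne {n : ℕ} {b : Fin n → ℂ} (hb : ∀ k, 0 < (b k).re) : auxG b 1 ≠ 0 := by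
  have h : (1 : MvPolynomial (Fin n) ℂ) = MvPolynomial.monomial 0 1 := rfl
  rw [h, auxG_monomial, one_mul]
  refine Finset.prod_ne_zero_iff.mpr fun k _ => ?_
  simp only [Finsupp.coe_zero, Pi.zero_apply, pow_zero, one_mul]
  rw [integral_gaussian_complex (hb k)]
  have hb0 : b k ≠ 0 := by
    intro h
    have := hb k
    simp [h] at this
  have : (Real.pi : ℂ) / b k ≠ 0 := div_ne_zero (by exact_mod_cast Real.pi_ne_zero) hb0
  simp [Complex.cpow_eq_zero_iff, this]

lemma auxG_ibp {n : ℕ} {b : Fin n → ℂ} (hb : ∀ k, 0 < (b k).re) (k : Fin n)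
    (p : MvPolynomial (Fin n) ℂ) :
    auxG b (MvPolynomial.X k * p) = 1 / (2 * b k) * auxG b (MvPolynomial.pderiv k p) := by
  induction p using MvPolynomial.induction_on' with
  | monomial s c =>
    rw [MvPolynomial.pderiv_monomial, MvPolynomial.X, MvPolynomial.monomial_mul, auxG_monomial,
      auxG_monomial, ← Finset.mul_prod_erase _ _ (Finset.mem_univ k),
      ← Finset.mul_prod_erase _ (fun j => ∫ x : ℝ, (x : ℂ) ^ ((s - Finsupp.single k 1 : Fin n →₀ ℕ) j) *
        Complex.exp (-b j * (x : ℂ) ^ 2)) (Finset.mem_univ k)]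
    have e1 : (Finsupp.single k 1 + s : Fin n →₀ ℕ) k = s k + 1 := by simp [add_comm]
    have e2 : (s - Finsupp.single k 1 : Fin n →₀ ℕ) k = s k - 1 := by simp
    rw [e1, e2, aux_rec1 (hb k)]
    have e3 : ∏ j ∈ Finset.univ.erase k, ∫ x : ℝ, (x : ℂ) ^ ((Finsupp.single k 1 + s : Fin n →₀ ℕ) j) *
        Complex.exp (-b j * (x : ℂ) ^ 2) =
        ∏ j ∈ Finset.univ.erase k, ∫ x : ℝ, (x : ℂ) ^ ((s - Finsupp.single k 1 : Fin n →₀ ℕ) j) *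
        Complex.exp (-b j * (x : ℂ) ^ 2) := by
      refine Finset.prod_congr rfl fun j hj => ?_
      have hj : j ≠ k := Finset.ne_of_mem_erase hj
      simp [Finsupp.single_apply, hj.symm]
    rw [e3]
    ring
  | add p q hp hq =>
    rw [mul_add, auxG_add hb, hp, hq, map_add, auxG_add hb]
    ring

/-- linear forms as polynomials -/
noncomputable def auxL {n m : ℕ} (w : Fin m → Fin n → ℂ) (i : Fin m) : MvPolynomial (Fin n) ℂ :=
  ∑ k, MvPolynomial.C (w i k) * MvPolynomial.X k

lemma aux_pderiv_L {n m : ℕ} (w : Fin m → Fin n → ℂ) (i : Fin m) (k : Fin n) :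
    MvPolynomial.pderiv k (auxL w i) = MvPolynomial.C (w i k) := by
  classical
  unfold auxL
  simp [MvPolynomial.pderiv_C_mul, MvPolynomial.pderiv_X, Pi.single_apply]

lemma aux_chain {n m : ℕ} (w : Fin m → Fin n → ℂ) (k : Fin n) (Q : MvPolynomial (Fin m) ℂ) :
    MvPolynomial.pderiv k (MvPolynomial.aeval (auxL w) Q) =
      ∑ j, MvPolynomial.C (w j k) * MvPolynomial.aeval (auxL w) (MvPolynomial.pderiv j Q) := by
  classical
  induction Q using MvPolynomial.induction_on with
  | C a => simp [MvPolynomial.algebraMap_eq]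
  | add p q hp hq => simp only [map_add, hp, hq, mul_add, Finset.sum_add_distrib]
  | mul_X p i hp =>
    rw [map_mul, MvPolynomial.pderiv_mul, hp, MvPolynomial.aeval_X, aux_pderiv_L]
    simp only [MvPolynomial.pderiv_mul, map_add, map_mul, MvPolynomial.aeval_X,
      MvPolynomial.pderiv_X, mul_add, Finset.sum_add_distrib, Finset.sum_mul]
    congr 1
    · simp only [mul_assoc]
    · rw [Finset.sum_eq_single i]
      · simp [mul_comm]
      · intro j _ hj
        simp [Pi.single_apply, hj.symm]
      · simp

lemma auxG_wick {n m : ℕ} {b : Fin n → ℂ} (hb : ∀ k, 0 < (b k).re) (w : Fin m → Fin n → ℂ)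
    (i : Fin m) (Q : MvPolynomial (Fin m) ℂ) :
    auxG b (MvPolynomial.aeval (auxL w) (MvPolynomial.X i * Q)) =
      ∑ j, (∑ k, w i k * w j k / (2 * b k)) *
        auxG b (MvPolynomial.aeval (auxL w) (MvPolynomial.pderiv j Q)) := by
  rw [map_mul, MvPolynomial.aeval_X]
  nth_rewrite 1 [auxL]
  rw [Finset.sum_mul, auxG_sum hb]
  simp_rw [mul_assoc, auxG_C_mul, auxG_ibp hb, aux_chain, auxG_sum hb, auxG_C_mul,
    Finset.mul_sum, Finset.sum_mul]
  rw [Finset.sum_comm]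
  refine Finset.sum_congr rfl fun j _ => Finset.sum_congr rfl fun k _ => ?_
  ring

lemma aux_limit {n m : ℕ} {b : ℝ → Fin n → ℂ} (hb : ∀ ε, 0 < ε → ∀ k, 0 < (b ε k).re)
    (w : Fin m → Fin n → ℂ)
    (hc : ∀ i j, Filter.Tendsto (fun ε => ∑ k, w i k * w j k / (2 * b ε k))
      (nhdsWithin 0 (Set.Ioi 0)) (nhds 0)) (P : MvPolynomial (Fin m) ℂ) :
    Filter.Tendsto (fun ε => auxG (b ε) (MvPolynomial.aeval (auxL w) P) / auxG (b ε) 1)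
      (nhdsWithin 0 (Set.Ioi 0)) (nhds (MvPolynomial.eval (fun _ => (0 : ℂ)) P)) := by
  have hpos : ∀ᶠ ε : ℝ in nhdsWithin 0 (Set.Ioi 0), 0 < ε := self_mem_nhdsWithin
  have key : ∀ N : ℕ, ∀ s : Fin m →₀ ℕ, s.degree = N → ∀ c : ℂ,
      Filter.Tendsto (fun ε => auxG (b ε) (MvPolynomial.aeval (auxL w)
        (MvPolynomial.monomial s c)) / auxG (b ε) 1) (nhdsWithin 0 (Set.Ioi 0))
        (nhds (MvPolynomial.eval (fun _ => (0 : ℂ)) (MvPolynomial.monomial s c))) := by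
    intro N
    induction N using Nat.strong_induction_on with
    | _ N ih =>
      intro s hs c
      by_cases h0 : s = 0
      · subst h0
        refine tendsto_const_nhds.congr' ?_
        filter_upwards [hpos] with ε hε
        have h1 : MvPolynomial.monomial (0 : Fin m →₀ ℕ) c = MvPolynomial.C c := rfl
        have h2 : MvPolynomial.aeval (auxL w) (MvPolynomial.C c : MvPolynomial (Fin m) ℂ)
          = MvPolynomial.C c * 1 := by simp [MvPolynomial.algebraMap_eq]
        rw [h1, h2, auxG_C_mul, mul_div_cancel_right₀ _ (auxG_one_ne (hb ε hε))]
        simp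
      · obtain ⟨i, hi⟩ : ∃ i, s i ≠ 0 := by
          by_contra! h
          exact h0 (Finsupp.ext h)
        obtain ⟨t, rfl⟩ : ∃ t, s = Finsupp.single i 1 + t :=
          ⟨s - Finsupp.single i 1, (add_tsub_cancel_of_le (by
            rw [Finsupp.single_le_iff]; omega)).symm⟩
        have hX : MvPolynomial.monomial (Finsupp.single i 1 + t) c =
            MvPolynomial.X i * MvPolynomial.monomial t c := by
          rw [MvPolynomial.X, MvPolynomial.monomial_mul, one_mul]
        have hlim : Filter.Tendsto (fun ε => ∑ j, (∑ k, w i k * w j k / (2 * b ε k)) *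
            (auxG (b ε) (MvPolynomial.aeval (auxL w) (MvPolynomial.pderiv j
              (MvPolynomial.monomial t c))) / auxG (b ε) 1)) (nhdsWithin 0 (Set.Ioi 0))
            (nhds (∑ j : Fin m, 0 * MvPolynomial.eval (fun _ => (0 : ℂ)) (MvPolynomial.pderiv j
              (MvPolynomial.monomial t c)))) := by
          refine tendsto_finsetSum _ fun j _ => (hc i j).mul ?_
          rw [MvPolynomial.pderiv_monomial]
          refine ih _ ?_ _ rfl _
          have h3 : (t - Finsupp.single j 1).degree ≤ t.degree := by
            have : t - Finsupp.single j 1 ≤ t := tsub_le_self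
            exact Finsupp.degree_mono this
          rw [map_add, Finsupp.degree_single] at hs
          omega
        have hz : MvPolynomial.eval (fun _ => (0 : ℂ))
            (MvPolynomial.monomial (Finsupp.single i 1 + t) c) =
            ∑ j : Fin m, 0 * MvPolynomial.eval (fun _ => (0 : ℂ)) (MvPolynomial.pderiv j
              (MvPolynomial.monomial t c)) := by
          rw [hX]; simp
        rw [hz]
        refine hlim.congr' ?_
        filter_upwards [hpos] with ε hε
        rw [hX, auxG_wick (hb ε hε), Finset.sum_div]
        simp_rw [mul_div_assoc]
  induction P using MvPolynomial.induction_on' with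
  | monomial s c => exact key _ s rfl c
  | add p q hp hq =>
    rw [map_add (MvPolynomial.eval _)]
    refine (hp.add hq).congr' ?_
    filter_upwards [hpos] with ε hε
    rw [map_add, auxG_add (hb ε hε), add_div]

lemma aux_spec {n : ℕ} (S : Matrix (Fin n) (Fin n) ℝ) (hS : S.IsSymm) :
    ∃ (U : Matrix (Fin n) (Fin n) ℝ) (d : Fin n → ℝ), U * Uᵀ = 1 ∧ Uᵀ * U = 1 ∧
      S = U * diagonal d * Uᵀ := by
  have hH : S.IsHermitian := by
    rw [Matrix.IsHermitian, Matrix.conjTranspose_eq_transpose_of_trivial]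
    exact hS
  refine ⟨hH.eigenvectorUnitary, hH.eigenvalues, ?_, ?_, ?_⟩
  · have := (Matrix.mem_unitaryGroup_iff).mp hH.eigenvectorUnitary.2
    rwa [Matrix.star_eq_conjTranspose, Matrix.conjTranspose_eq_transpose_of_trivial] at this
  · have := (Matrix.mem_unitaryGroup_iff').mp hH.eigenvectorUnitary.2
    rwa [Matrix.star_eq_conjTranspose, Matrix.conjTranspose_eq_transpose_of_trivial] at this
  · have := hH.spectral_theorem
    rw [Unitary.conjStarAlgAut_apply, Matrix.star_eq_conjTranspose,
      Matrix.conjTranspose_eq_transpose_of_trivial] at this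
    exact this

lemma aux_mp {n : ℕ} {U : Matrix (Fin n) (Fin n) ℝ} (h1 : U * Uᵀ = 1) :
    MeasurePreserving (fun y : Fin n → ℝ => U *ᵥ y) volume volume := by
  have hd : U.det * U.det = 1 := by
    have := congrArg Matrix.det h1
    rwa [Matrix.det_mul, Matrix.det_transpose, Matrix.det_one] at this
  have hd0 : U.det ≠ 0 := by
    intro h
    simp [h] at hd
  have hab : |U.det⁻¹| = 1 := by
    rw [abs_inv]
    rcases mul_self_eq_one_iff.mp hd with h | h <;> simp [h]
  have := Real.map_matrix_volume_pi_eq_smul_volume_pi hd0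
  rw [hab, ENNReal.ofReal_one, one_smul] at this
  refine ⟨by fun_prop, ?_⟩
  exact this

lemma aux_me {n : ℕ} {U : Matrix (Fin n) (Fin n) ℝ} (h1 : U * Uᵀ = 1) (h2 : Uᵀ * U = 1) :
    MeasurableEmbedding (fun y : Fin n → ℝ => U *ᵥ y) :=
  (Matrix.toLin'OfInv h2 h1).toContinuousLinearEquiv.toHomeomorph.measurableEmbedding


/-- Moments of the regularized Gauss-type oscillatory integral on `ℝⁿ`
with symmetric invertible covariance operator `S`: if `⟨v_i, S⁻¹ v_j⟩ = 0` for all `i, j`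
then for every polynomial `Φ` the normalized regularized integral of
`Φ(⟨x,v₁⟩,…,⟨x,v_m⟩)` converges to `Φ(0,…,0)` as `ε → 0⁺`; moreover for each `ε > 0` the
numerator is absolutely convergent and the denominator is nonzero. -/
theorem stmt_6
    (n m : ℕ) (S : Matrix (Fin n) (Fin n) ℝ) (hS : S.IsSymm) (hSdet : IsUnit S.det)
    (v : Fin m → (Fin n → ℝ))
    (hv : ∀ i j : Fin m, v i ⬝ᵥ (S⁻¹).mulVec (v j) = 0)
    (P : MvPolynomial (Fin m) ℂ) :
    (∀ ε : ℝ, 0 < ε →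
      Integrable fun x : Fin n → ℝ =>
        MvPolynomial.eval (fun i => ((x ⬝ᵥ v i : ℝ) : ℂ)) P *
          Complex.exp ((-(ε * ∑ i, x i ^ 2) : ℝ) : ℂ) *
          Complex.exp (Complex.I / 2 * ((x ⬝ᵥ S.mulVec x : ℝ) : ℂ))) ∧
    (∀ ε : ℝ, 0 < ε →
      (∫ x : Fin n → ℝ,
        Complex.exp ((-(ε * ∑ i, x i ^ 2) : ℝ) : ℂ) *
          Complex.exp (Complex.I / 2 * ((x ⬝ᵥ S.mulVec x : ℝ) : ℂ))) ≠ 0) ∧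
    Filter.Tendsto
      (fun ε : ℝ =>
        (∫ x : Fin n → ℝ,
          MvPolynomial.eval (fun i => ((x ⬝ᵥ v i : ℝ) : ℂ)) P *
            Complex.exp ((-(ε * ∑ i, x i ^ 2) : ℝ) : ℂ) *
            Complex.exp (Complex.I / 2 * ((x ⬝ᵥ S.mulVec x : ℝ) : ℂ))) /
          ∫ x : Fin n → ℝ,
            Complex.exp ((-(ε * ∑ i, x i ^ 2) : ℝ) : ℂ) *
              Complex.exp (Complex.I / 2 * ((x ⬝ᵥ S.mulVec x : ℝ) : ℂ)))
      (nhdsWithin 0 (Set.Ioi 0)) (nhds (MvPolynomial.eval (fun _ => (0 : ℂ)) P)) := by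
  obtain ⟨U, d, h1, h2, hSU⟩ := aux_spec S hS
  have hd0 : ∀ k, d k ≠ 0 := by
    intro k hk
    apply hSdet.ne_zero
    rw [hSU, det_mul, det_mul, det_diagonal, Finset.prod_eq_zero (Finset.mem_univ k) hk]
    simp
  set b : ℝ → Fin n → ℂ := fun ε k => (ε : ℂ) - Complex.I / 2 * (d k : ℂ) with hbdef
  have hb : ∀ ε : ℝ, 0 < ε → ∀ k, 0 < (b ε k).re := by
    intro ε hε k
    simpa [hbdef] using hε
  set w : Fin m → Fin n → ℂ := fun i k => ((Uᵀ *ᵥ v i) k : ℂ) with hw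
  have hmp := aux_mp h1
  have hme := aux_me h1 h2
  have hexp : ∀ (ε : ℝ) (y : Fin n → ℝ),
      Complex.exp ((-(ε * ∑ i, (U *ᵥ y) i ^ 2) : ℝ) : ℂ) *
        Complex.exp (Complex.I / 2 * (((U *ᵥ y) ⬝ᵥ S.mulVec (U *ᵥ y) : ℝ) : ℂ)) =
      ∏ k, Complex.exp (-b ε k * (y k : ℂ) ^ 2) := by
    intro ε y
    have e1 : ∑ i, (U *ᵥ y) i ^ 2 = ∑ k, y k ^ 2 := by
      have : (U *ᵥ y) ⬝ᵥ (U *ᵥ y) = y ⬝ᵥ y := by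
        rw [Matrix.dotProduct_mulVec, ← Matrix.mulVec_transpose, Matrix.mulVec_mulVec, h2,
          Matrix.one_mulVec]
      simpa [dotProduct, sq] using this
    have e2 : (U *ᵥ y) ⬝ᵥ S.mulVec (U *ᵥ y) = ∑ k, d k * y k ^ 2 := by
      have : S *ᵥ (U *ᵥ y) = U *ᵥ (diagonal d *ᵥ y) := by
        rw [Matrix.mulVec_mulVec, Matrix.mulVec_mulVec, hSU, Matrix.mul_assoc, h2, Matrix.mul_one]
      rw [this, Matrix.dotProduct_mulVec, ← Matrix.mulVec_transpose, Matrix.mulVec_mulVec, h2,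
          Matrix.one_mulVec]
      simp only [dotProduct, Matrix.mulVec_diagonal]
      exact Finset.sum_congr rfl fun k _ => by ring
    rw [e1, e2, ← Complex.exp_add, ← Complex.exp_sum]
    congr 1
    push_cast
    rw [Finset.mul_sum, Finset.mul_sum, ← Finset.sum_neg_distrib, ← Finset.sum_add_distrib]
    exact Finset.sum_congr rfl fun k _ => by simp only [hbdef]; ring
  have hev : ∀ y : Fin n → ℝ,
      MvPolynomial.eval (fun i => (((U *ᵥ y) ⬝ᵥ v i : ℝ) : ℂ)) P =
      MvPolynomial.eval (fun k => (y k : ℂ)) (MvPolynomial.aeval (auxL w) P) := by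
    intro y
    have e : (fun i => (((U *ᵥ y) ⬝ᵥ v i : ℝ) : ℂ)) =
        fun i => MvPolynomial.eval (fun k => (y k : ℂ)) (auxL w i) := by
      funext i
      have : (U *ᵥ y) ⬝ᵥ v i = (Uᵀ *ᵥ v i) ⬝ᵥ y := by
        rw [dotProduct_comm, Matrix.dotProduct_mulVec, ← Matrix.mulVec_transpose]
      rw [this]
      simp [auxL, hw, dotProduct]
    rw [e, MvPolynomial.aeval_def, MvPolynomial.eval₂_eq', MvPolynomial.eval_eq']
    simp [MvPolynomial.algebraMap_eq]
  have hnum : ∀ (ε : ℝ) (y : Fin n → ℝ),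
      MvPolynomial.eval (fun i => (((U *ᵥ y) ⬝ᵥ v i : ℝ) : ℂ)) P *
        Complex.exp ((-(ε * ∑ i, (U *ᵥ y) i ^ 2) : ℝ) : ℂ) *
        Complex.exp (Complex.I / 2 * (((U *ᵥ y) ⬝ᵥ S.mulVec (U *ᵥ y) : ℝ) : ℂ)) =
      MvPolynomial.eval (fun k => (y k : ℂ)) (MvPolynomial.aeval (auxL w) P) *
        ∏ k, Complex.exp (-b ε k * (y k : ℂ) ^ 2) := by
    intro ε y
    rw [mul_assoc, hexp, hev]
  have hden : ∀ ε : ℝ, (∫ x : Fin n → ℝ,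
        Complex.exp ((-(ε * ∑ i, x i ^ 2) : ℝ) : ℂ) *
          Complex.exp (Complex.I / 2 * ((x ⬝ᵥ S.mulVec x : ℝ) : ℂ))) = auxG (b ε) 1 := by
    intro ε
    rw [← hmp.integral_comp hme]
    simp_rw [hexp]
    simp [auxG]
  have hnumI : ∀ ε : ℝ, (∫ x : Fin n → ℝ,
        MvPolynomial.eval (fun i => ((x ⬝ᵥ v i : ℝ) : ℂ)) P *
            Complex.exp ((-(ε * ∑ i, x i ^ 2) : ℝ) : ℂ) *
            Complex.exp (Complex.I / 2 * ((x ⬝ᵥ S.mulVec x : ℝ) : ℂ))) =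
        auxG (b ε) (MvPolynomial.aeval (auxL w) P) := by
    intro ε
    rw [← hmp.integral_comp hme]
    simp_rw [hnum]
    rfl
  refine ⟨fun ε hε => ?_, fun ε hε => ?_, ?_⟩
  · rw [← hmp.integrable_comp_emb hme]
    refine (aux_intG (hb ε hε) (MvPolynomial.aeval (auxL w) P)).congr
      (Filter.Eventually.of_forall fun y => ?_)
    exact (hnum ε y).symm
  · rw [hden]
    exact auxG_one_ne (hb ε hε)
  · simp_rw [hden, hnumI]
    refine aux_limit hb w (fun i j => ?_) P
    have hinv : S⁻¹ = U * diagonal (fun k => (d k)⁻¹) * Uᵀ := by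
      apply Matrix.inv_eq_right_inv
      have hdd : diagonal d * diagonal (fun k => (d k)⁻¹) = 1 := by
        rw [Matrix.diagonal_mul_diagonal, ← Matrix.diagonal_one]
        congr 1
        funext k
        exact mul_inv_cancel₀ (hd0 k)
      calc S * (U * diagonal (fun k => (d k)⁻¹) * Uᵀ)
          = U * (diagonal d * (Uᵀ * U) * diagonal (fun k => (d k)⁻¹)) * Uᵀ := by
            rw [hSU]; simp only [Matrix.mul_assoc]
        _ = 1 := by rw [h2, Matrix.mul_one, hdd, Matrix.mul_one, h1]
    have hz : ∑ k, w i k * w j k / (2 * b 0 k) = 0 := by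
      have h := hv i j
      rw [hinv, ← Matrix.mulVec_mulVec, ← Matrix.mulVec_mulVec, Matrix.dotProduct_mulVec,
        ← Matrix.mulVec_transpose] at h
      simp only [dotProduct, Matrix.mulVec_diagonal] at h
      have h' := congrArg (fun r : ℝ => Complex.I * (r : ℂ)) h
      simp only [Complex.ofReal_sum, Complex.ofReal_zero, mul_zero, Finset.mul_sum] at h'
      rw [← h']
      refine Finset.sum_congr rfl fun k _ => ?_
      have : (d k : ℂ) ≠ 0 := by exact_mod_cast hd0 k
      have hI := Complex.I_ne_zero
      simp only [hbdef, hw]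
      push_cast
      rw [zero_sub, div_eq_iff (by simp [this])]
      field_simp
      linear_combination (((Uᵀ *ᵥ v i) k : ℝ) : ℂ) * (((Uᵀ *ᵥ v j) k : ℝ) : ℂ) * Complex.I_sq
    have hcont : ContinuousAt (fun ε => ∑ k, w i k * w j k / (2 * b ε k)) 0 := by
      refine tendsto_finsetSum _ fun k _ => ?_
      have : (d k : ℂ) ≠ 0 := by exact_mod_cast hd0 k
      refine ContinuousAt.div continuousAt_const ?_ ?_
      · simp only [hbdef]
        fun_prop
      · simp [hbdef, this]
    have := hcont.tendsto
    rw [hz] at this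
    exact this.mono_left nhdsWithin_le_nhds
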